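/- Let G be an (n−k)-regular bipartite false twin-free graph on 2n vertices with bipartition A ∪ B and γ_t(G) = γ_gr^t(G) = 6, let a_1 ≠ a_2 be vertices of A, and set B_2 = N(a_1)\N(a_2), B_1 = N(a_2)\N(a_1), B' = N(a_1) ∩ N(a_2), and A' = {a ∈ A\{a_1,a_2} : N(a) ⊆ B_1 ∪ B_2 ∪ B'}. Then every vertex b ∈ B_1 ∪ B_2 ∪ B' has exactly one non-neighbor in {a_1, a_2} ∪ A'. -/

import Mathlib

/-- `S` is a total dominating set of `G`: every vertex has a neighbor in `S`. -/
def IsTotalDomSet {V : Type*} (G : SimpleGraph V) (S : Set V) : Prop :=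
  ∀ v : V, ∃ u ∈ S, G.Adj v u

/-- `l` is a legal sequence of `G`: the vertices are distinct and every vertex
(except possibly the first) totally dominates a vertex not totally dominated
by the previous vertices. -/
def IsLegalSeq {V : Type*} (G : SimpleGraph V) (l : List V) : Prop :=
  l.Nodup ∧ ∀ i : Fin l.length, 0 < (i : ℕ) →
    ∃ w : V, G.Adj (l.get i) w ∧ ∀ j : Fin l.length, (j : ℕ) < (i : ℕ) → ¬ G.Adj (l.get j) w

/-- `l` is a total dominating sequence of `G`. -/
def IsTotalDomSeq {V : Type*} (G : SimpleGraph V) (l : List V) : Prop :=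
  IsLegalSeq G l ∧ IsTotalDomSet G {v | v ∈ l}

/-- The Grundy total domination number of `G`: the maximum length of a total
dominating sequence. -/
noncomputable def grundyTotalDomNum {V : Type*} (G : SimpleGraph V) : ℕ :=
  sSup {k : ℕ | ∃ l : List V, IsTotalDomSeq G l ∧ l.length = k}

/-- The total domination number of `G`: the minimum cardinality of a total
dominating set. -/
noncomputable def totalDomNum {V : Type*} (G : SimpleGraph V) : ℕ :=
  sInf {k : ℕ | ∃ S : Set V, IsTotalDomSet G S ∧ S.ncard = k}

/-- `A`, `B` is a bipartition of `G`. -/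
def IsBipartitionOf {V : Type*} (G : SimpleGraph V) (A B : Set V) : Prop :=
  (∀ v : V, (v ∈ A ∧ v ∉ B) ∨ (v ∈ B ∧ v ∉ A)) ∧
  ∀ ⦃u v : V⦄, G.Adj u v → (u ∈ A ∧ v ∈ B) ∨ (u ∈ B ∧ v ∈ A)

/-- `G` has no false twins: distinct vertices have distinct open neighborhoods. -/
def FalseTwinFree {V : Type*} (G : SimpleGraph V) : Prop :=
  ∀ u v : V, u ≠ v → G.neighborSet u ≠ G.neighborSet v

/-- `G` has no isolated vertices. -/
def NoIsolatedVerts {V : Type*} (G : SimpleGraph V) : Prop :=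
  ∀ v : V, ∃ u : V, G.Adj v u

/-- A list of pairs (vertex, footprint): each vertex is adjacent to its own footprint, and
not adjacent to the footprint of any later vertex. -/
def IsFootprinted {V : Type*} (G : SimpleGraph V) (l : List (V × V)) : Prop :=
  (∀ p ∈ l, G.Adj p.1 p.2) ∧ l.Pairwise fun p q => ¬ G.Adj p.1 q.2

namespace IsFootprinted

variable {V : Type*} {G : SimpleGraph V} {l l' : List (V × V)}

theorem append_iff : IsFootprinted G (l ++ l') ↔
    IsFootprinted G l ∧ IsFootprinted G l' ∧ ∀ p ∈ l, ∀ q ∈ l', ¬ G.Adj p.1 q.2 := by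
  simp only [IsFootprinted, List.pairwise_append, List.mem_append]
  grind

theorem reverse_swap (h : IsFootprinted G l) : IsFootprinted G (l.reverse.map Prod.swap) := by
  refine ⟨fun p hp => ?_, ?_⟩
  · obtain ⟨q, hq, rfl⟩ := List.mem_map.1 hp
    exact (h.1 q (List.mem_reverse.1 hq)).symm
  · rw [List.pairwise_map, List.pairwise_reverse]
    exact h.2.imp fun hpq hqp => hpq hqp.symm

theorem nodup_map_fst (h : IsFootprinted G l) : (l.map Prod.fst).Nodup := by
  rw [List.Nodup, List.pairwise_map]
  refine h.2.imp_of_mem fun {p q} _ hq hpq heq => hpq ?_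
  rw [heq]
  exact h.1 q hq

theorem isLegalSeq (h : IsFootprinted G l) : IsLegalSeq G (l.map Prod.fst) := by
  refine ⟨h.nodup_map_fst, fun ⟨i, hi⟩ _ => ?_⟩
  have hi' : i < l.length := by simpa using hi
  refine ⟨l[i].2, ?_, fun ⟨j, hj⟩ hji => ?_⟩
  · simpa using h.1 _ (List.getElem_mem hi')
  · simpa using List.pairwise_iff_getElem.1 h.2 j i (lt_trans hji hi') hi' hji

theorem length_le_card [Fintype V] (h : IsFootprinted G l) : l.length ≤ Fintype.card V := by
  simpa using h.nodup_map_fst.length_le_card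

/-- In a finite graph, a footprinted list extends to one whose vertices are a total
dominating set, provided no vertex is isolated. -/
theorem exists_append_isTotalDomSet [Fintype V] (hG : NoIsolatedVerts G)
    (h : IsFootprinted G l) :
    ∃ l', IsFootprinted G (l ++ l') ∧ IsTotalDomSet G {v | v ∈ (l ++ l').map Prod.fst} := by
  induction hm : Fintype.card V - l.length using Nat.strong_induction_on generalizing l with
  | _ m ih =>
    by_cases hd : IsTotalDomSet G {v | v ∈ l.map Prod.fst}
    · exact ⟨[], by simpa using h, by simpa using hd⟩
    · obtain ⟨v, hv⟩ := not_forall.1 hd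
      obtain ⟨u, hu⟩ := hG v
      have hl : IsFootprinted G (l ++ [(u, v)]) := by
        refine append_iff.2 ⟨h, by simpa [IsFootprinted] using hu.symm, ?_⟩
        intro p hp q hq hpq
        obtain rfl := List.mem_singleton.1 hq
        exact hv ⟨p.1, List.mem_map_of_mem hp, hpq.symm⟩
      have hlen := hl.length_le_card
      rw [List.length_append, List.length_singleton] at hlen
      obtain ⟨l', h1, h2⟩ := ih _ (by simp; omega) hl rfl
      exact ⟨(u, v) :: l', by simpa using h1, by simpa using h2⟩

theorem length_le_grundyTotalDomNum [Fintype V] (h : IsFootprinted G l)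
    (hd : IsTotalDomSet G {v | v ∈ l.map Prod.fst}) : l.length ≤ grundyTotalDomNum G := by
  refine le_csSup ⟨Fintype.card V, ?_⟩ ⟨_, ⟨h.isLegalSeq, hd⟩, by simp⟩
  rintro _ ⟨s, hs, rfl⟩
  exact hs.1.1.length_le_card

end IsFootprinted

section

variable {V : Type*} {G : SimpleGraph V}

theorem totalDomNum_le_length {s : List V} (hd : IsTotalDomSet G {v | v ∈ s}) :
    totalDomNum G ≤ s.length := by
  classical
  have h : totalDomNum G ≤ {v | v ∈ s}.ncard := Nat.sInf_le ⟨_, hd, rfl⟩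
  refine h.trans ?_
  have : {v | v ∈ s} = (s.toFinset : Set V) := by ext; simp
  rw [this, Set.ncard_coe_finset]
  exact s.toFinset_card_le

theorem noIsolatedVerts_of_totalDomNum_pos (h : 0 < totalDomNum G) : NoIsolatedVerts G := by
  obtain ⟨_, S, hS, _⟩ := Nat.nonempty_of_pos_sInf h
  intro v
  obtain ⟨u, _, hu⟩ := hS v
  exact ⟨u, hu⟩

/-- In a regular false twin-free finite graph, neighborhoods are pairwise incomparable. -/
theorem FalseTwinFree.exists_adj_not_adj [Finite V] (hG : FalseTwinFree G) {d : ℕ}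
    (hreg : ∀ v, (G.neighborSet v).ncard = d) {u v : V} (huv : u ≠ v) :
    ∃ w, G.Adj u w ∧ ¬ G.Adj v w := by
  by_contra! h
  exact hG u v huv <| Set.eq_of_subset_of_ncard_le (fun w hw => h w hw)
    (by rw [hreg, hreg])

variable [Fintype V] {X : Set V} {m : ℕ}

/-- A footprinted list on one side of a bipartite graph has at most half the Grundy total
domination number many vertices. -/
theorem IsFootprinted.two_mul_length_le {l : List (V × V)} (h : IsFootprinted G l)
    (hG : NoIsolatedVerts G) (hX : ∀ ⦃u v⦄, G.Adj u v → (u ∈ X ↔ v ∉ X))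
    (hl : ∀ p ∈ l, p.1 ∈ X) : 2 * l.length ≤ grundyTotalDomNum G := by
  have h' : IsFootprinted G (l ++ l.reverse.map Prod.swap) := by
    refine append_iff.2 ⟨h, h.reverse_swap, fun p hp q hq hpq => ?_⟩
    obtain ⟨r, hr, rfl⟩ := List.mem_map.1 hq
    exact (hX hpq).1 (hl p hp) (hl r (List.mem_reverse.1 hr))
  obtain ⟨l', h1, h2⟩ := h'.exists_append_isTotalDomSet hG
  have := h1.length_le_grundyTotalDomNum h2
  simp only [List.length_append, List.length_map, List.length_reverse] at this
  omega

/-- In a regular bipartite false twin-free graph whose total domination number and Grundy total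
domination number are both 6, two vertices on the same side have exactly one common
non-neighbor on the other side. -/
theorem existsUnique_common_nonneighbor (hG : FalseTwinFree G) {d : ℕ}
    (hreg : ∀ v, (G.neighborSet v).ncard = d)
    (hX : ∀ ⦃u v⦄, G.Adj u v → (u ∈ X ↔ v ∉ X))
    (ht : totalDomNum G = 6) (hg : grundyTotalDomNum G = 6)
    {x y : V} (hx : x ∈ X) (hy : y ∈ X) (hxy : x ≠ y) :
    ∃! z, z ∉ X ∧ ¬ G.Adj x z ∧ ¬ G.Adj y z := by
  have hiso : NoIsolatedVerts G := noIsolatedVerts_of_totalDomNum_pos (by omega)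
  obtain ⟨c, hxc⟩ := hiso x
  obtain ⟨e, hye, hxe⟩ := hG.exists_adj_not_adj hreg hxy.symm
  have hex : ∃ z, z ∉ X ∧ ¬ G.Adj x z ∧ ¬ G.Adj y z := by
    by_contra! hcov
    have h : IsFootprinted G [(x, c), (y, e)] := by simp [IsFootprinted, hxc, hye, hxe]
    obtain ⟨l', h1, h2⟩ := h.exists_append_isTotalDomSet hiso
    have hlen := totalDomNum_le_length h2
    obtain ⟨-, h3, h4⟩ := IsFootprinted.append_iff.1 h1
    have := h3.two_mul_length_le (X := Xᶜ) hiso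
      (fun u v huv => by have := hX huv; simp only [Set.mem_compl_iff]; tauto)
      (fun p hp => by
        have hp2 : p.2 ∈ X := by
          by_contra hn
          exact h4 (y, e) (by simp) p hp (hcov _ hn (h4 (x, c) (by simp) p hp))
        exact fun hp1 => (hX (h3.1 p hp)).1 hp1 hp2)
    simp only [List.length_map, List.length_append, List.length_cons, List.length_nil] at hlen
    omega
  obtain ⟨z, hz, hxz, hyz⟩ := hex
  refine ⟨z, ⟨hz, hxz, hyz⟩, fun z' ⟨hz', hxz', hyz'⟩ => ?_⟩
  by_contra hne
  obtain ⟨s, hzs, hzs'⟩ := hG.exists_adj_not_adj hreg (Ne.symm hne)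
  obtain ⟨t, hzt⟩ := hiso z'
  have h : IsFootprinted G [(x, c), (y, e), (s, z), (t, z')] := by
    simp [IsFootprinted, hxc, hye, hxe, hzs.symm, hzt.symm, hxz, hyz, hxz', hyz',
      G.adj_comm s z', hzs']
  have := h.two_mul_length_le hiso hX (by
    have := hX hzs
    have := hX hzt
    simp only [List.mem_cons, List.not_mem_nil, or_false]
    rintro p (rfl | rfl | rfl | rfl) <;> simp only <;> tauto)
  simp only [List.length_cons, List.length_nil] at this
  omega

end

/-- Every vertex `b ∈ B₁ ∪ B₂ ∪ B'` has exactly one non-neighbor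
in `{a₁, a₂} ∪ A'`. -/
theorem claim_unique_nonneighbor
    {V : Type*} [Fintype V] (G : SimpleGraph V) (n k : ℕ) (A B : Set V)
    (hbip : IsBipartitionOf G A B) (hftf : FalseTwinFree G)
    (hcard : Fintype.card V = 2 * n)
    (hreg : ∀ v : V, (G.neighborSet v).ncard = n - k)
    (ht : totalDomNum G = 6) (hg : grundyTotalDomNum G = 6)
    (a₁ a₂ : V) (ha₁ : a₁ ∈ A) (ha₂ : a₂ ∈ A) (hne : a₁ ≠ a₂)
    (B₁ B₂ B' A' : Set V)
    (hB₂ : B₂ = G.neighborSet a₁ \ G.neighborSet a₂)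
    (hB₁ : B₁ = G.neighborSet a₂ \ G.neighborSet a₁)
    (hB' : B' = G.neighborSet a₁ ∩ G.neighborSet a₂)
    (hA' : A' = {a ∈ A \ {a₁, a₂} | G.neighborSet a ⊆ B₁ ∪ B₂ ∪ B'})
    (b : V) (hb : b ∈ B₁ ∪ B₂ ∪ B') :
    ∃! a : V, a ∈ ({a₁, a₂} : Set V) ∪ A' ∧ ¬ G.Adj a b := by
  have hAB : ∀ v, v ∈ B ↔ v ∉ A := fun v => by have := hbip.1 v; tauto
  have hadj : ∀ ⦃u v⦄, G.Adj u v → (u ∈ A ↔ v ∉ A) := fun u v huv => by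
    have := hbip.2 huv
    simp only [hAB] at this
    tauto
  obtain ⟨w, ⟨hwA, hw₁, hw₂⟩, hw⟩ :=
    existsUnique_common_nonneighbor hftf hreg hadj ht hg ha₁ ha₂ hne
  have hU : ∀ c, c ∈ B₁ ∪ B₂ ∪ B' ↔ G.Adj a₁ c ∨ G.Adj a₂ c := fun c => by
    simp only [hB₁, hB₂, hB', Set.mem_union, Set.mem_sdiff, Set.mem_inter_iff,
      SimpleGraph.mem_neighborSet]
    tauto
  have hb' := (hU b).1 hb
  have hbA : b ∉ A := hb'.elim (fun h => (hadj h).1 ha₁) fun h => (hadj h).1 ha₂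
  have hbw : b ≠ w := by
    rintro rfl
    exact hb'.elim hw₁ hw₂
  have hside : ∀ a, a ∈ ({a₁, a₂} : Set V) ∪ A' ↔ a ∈ A ∧ ¬ G.Adj w a := by
    intro a
    rw [hA', G.adj_comm]
    constructor
    · rintro ((rfl | rfl) | ⟨⟨ha, -⟩, hsub⟩)
      · exact ⟨ha₁, hw₁⟩
      · exact ⟨ha₂, hw₂⟩
      · exact ⟨ha, fun h => ((hU w).1 (hsub h)).elim hw₁ hw₂⟩
    · rintro ⟨ha, haw⟩
      by_cases h : a ∈ ({a₁, a₂} : Set V)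
      · exact Or.inl h
      · refine Or.inr ⟨⟨ha, h⟩, fun c hc => (hU c).2 ?_⟩
        by_contra! hcn
        obtain rfl := hw c ⟨(hadj hc).1 ha, hcn⟩
        exact haw hc
  have key := existsUnique_common_nonneighbor (X := Aᶜ) hftf hreg
    (fun u v huv => by have := hadj huv; simp only [Set.mem_compl_iff]; tauto)
    ht hg hbA hwA hbw
  convert key using 2 with a
  rw [hside, Set.notMem_compl_iff, G.adj_comm a b]
  tauto
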